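/- With H, G_i, G = ⋁_H{G_1,…,G_k}, ρ_{ij}, w_i, α, β, γ, δ (α ≠ 0), U(G), U_i, and P_i = U_i + δw_i I as above, assume additionally that α + δ = 0. Set p_i = β + γn_i + δw_i, which is an eigenvalue of P_i with eigenvector 1_{n_i}. Then (∏_{i=1}^k (λ − p_i)) · det(λI − U(G)) = (∏_{i=1}^k det(λI − P_i)) · det(λI_k − Ũ′(G)), where Ũ′(G) is the k×k real matrix with diagonal entries p_i and (i,j) off-diagonal entries √(n_i n_j)(ρ_{ij}α + γ). Equivalently, the spectrum of U(G) is the multiset union of the spectra of the P_i with one copy of p_i removed from each, together with the spectrum of Ũ′(G). (Taking (α,β,γ,δ) = (−1,0,0,1) yields the Laplacian spectrum of the H-join of arbitrary graphs.) -/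

import Mathlib

/-!
Over the field of rational functions write `λI - U(G) = B - E M Eᵀ`, where `B` is block diagonal
with blocks `λI - Pᵢ`, `E` is the matrix whose `i`-th column is the indicator of the `i`-th part,
and `M` is the `k × k` matrix of the off-diagonal constants, with zero diagonal. Because
`α + δ = 0`, the degree terms cancel in `Pᵢ 1 = pᵢ 1`, so `B E = E D` with `D = diag (λ - pᵢ)`.
Hence `B - E M Eᵀ = B (1 - E D⁻¹ M Eᵀ)`, and the Weinstein–Aronszajn identity
`det (1 - X Y) = det (1 - Y X)` together with `Eᵀ E = diag (nᵢ)` reduces the second factor to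
the `k × k` determinant `det (1 - D⁻¹ M Eᵀ E)`. Multiplying by `det D` and conjugating by
`S = diag (√nᵢ)` turns that into `det (D - S M S)`, the characteristic determinant of `Ũ′(G)`.
-/

open Matrix

set_option synthInstance.maxHeartbeats 1000000
set_option maxHeartbeats 1000000

/-- The characteristic matrix `λI - M` viewed over the field of rational functions. -/
noncomputable def resolventForm {K : Type*} [Field K] {n : Type*} [Fintype n] [DecidableEq n]
    (M : Matrix n n K) : Matrix n n (RatFunc K) :=
  Matrix.diagonal (fun _ => (RatFunc.X : RatFunc K)) - M.map (fun x => RatFunc.C x)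

/-- The universal adjacency matrix `αA(G) + βI + γJ + δD(G)` of a graph `G`. -/
noncomputable def univMat {V : Type*} [Fintype V] [DecidableEq V]
    (G : SimpleGraph V) [DecidableRel G.Adj] (α β γ δ : ℝ) : Matrix V V ℝ :=
  α • (G.adjMatrix ℝ) + β • (1 : Matrix V V ℝ) + γ • (Matrix.of fun _ _ => (1 : ℝ)) +
    δ • Matrix.diagonal (fun v => (G.degree v : ℝ))

/-- The determinant of a block diagonal matrix with blocks of varying size. The order on `ι` only
serves to view the matrix as block triangular. -/
theorem det_blockDiagonal'_eq_prod {F ι : Type*} [Field F] [Fintype ι] [DecidableEq ι]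
    [LinearOrder ι] {m : ι → Type*} [∀ i, Fintype (m i)] [∀ i, DecidableEq (m i)]
    (B : ∀ i, Matrix (m i) (m i) F) :
    (blockDiagonal' B).det = ∏ i, (B i).det := by
  rw [(blockTriangular_blockDiagonal' B).det_fintype]
  refine Finset.prod_congr rfl fun i _ => ?_
  rw [← Matrix.det_submatrix_equiv_self (Equiv.sigmaSubtype i).symm]
  congr 1
  ext a b
  exact blockDiagonal'_apply_eq B i a b

/-- The determinant identity behind the `H`-join formula: a block diagonal matrix whose blocks
have constant row sums `d i`, perturbed by a matrix that is constant on blocks. -/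
theorem det_blockDiagonal_sub_const {F ι : Type*} [Field F] [Fintype ι] [DecidableEq ι]
    [LinearOrder ι] {m : ι → Type*} [∀ i, Fintype (m i)] [∀ i, DecidableEq (m i)]
    (B : ∀ i, Matrix (m i) (m i) F) (d : ι → F) (hd : ∀ i, d i ≠ 0)
    (hB : ∀ i a, ∑ b, B i a b = d i) (M : Matrix ι ι F) (s : ι → F)
    (hs : ∀ i, s i * s i = Fintype.card (m i)) (hs0 : ∀ i, s i ≠ 0) :
    (∏ i, d i) * (blockDiagonal' B - Matrix.of fun x y : Σ i, m i => M x.1 y.1).det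
      = (∏ i, (B i).det) * (diagonal d - diagonal s * M * diagonal s).det := by
  let E : Matrix (Σ i, m i) ι F := Matrix.of fun x i => if x.1 = i then 1 else 0
  have hEME : (Matrix.of fun x y : Σ i, m i => M x.1 y.1) = E * M * Eᵀ := by
    ext x y
    simp [E, Matrix.mul_apply]
  have hBE : blockDiagonal' B * E = E * diagonal d := by
    ext ⟨i, a⟩ j
    rw [Matrix.mul_diagonal, Matrix.mul_apply, Fintype.sum_sigma, Finset.sum_eq_single i]
    · by_cases h : i = j
      · subst h
        simp [E, hB]
      · simp [E, h]
    · intro l _ hl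
      exact Finset.sum_eq_zero fun b _ => by
        rw [blockDiagonal'_apply_ne _ _ _ hl.symm, zero_mul]
    · simp
  have hEE : Eᵀ * E = diagonal s * diagonal s := by
    ext i j
    rw [Matrix.diagonal_mul_diagonal, Matrix.mul_apply, Fintype.sum_sigma,
      Finset.sum_eq_single i]
    · by_cases h : i = j
      · subst h
        simp [E, hs]
      · simp [E, h]
    · intro l _ hl
      simp [E, hl]
    · simp
  have hDD : diagonal d * diagonal (fun i => (d i)⁻¹) = 1 := by
    simp [Matrix.diagonal_mul_diagonal, hd]
  have hfac : blockDiagonal' B - (Matrix.of fun x y : Σ i, m i => M x.1 y.1)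
      = blockDiagonal' B * (1 - E * (diagonal (fun i => (d i)⁻¹) * M * Eᵀ)) := by
    have h : blockDiagonal' B * (E * (diagonal (fun i => (d i)⁻¹) * M * Eᵀ)) = E * M * Eᵀ := by
      rw [← Matrix.mul_assoc, hBE, Matrix.mul_assoc E, Matrix.mul_assoc _ M,
        ← Matrix.mul_assoc (diagonal d), hDD, Matrix.one_mul, Matrix.mul_assoc]
    rw [hEME, Matrix.mul_sub, Matrix.mul_one, h]
  have hsmall : (1 - E * (diagonal (fun i => (d i)⁻¹) * M * Eᵀ)).det
      = (1 - diagonal (fun i => (d i)⁻¹) * M * (diagonal s * diagonal s)).det := by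
    rw [Matrix.det_one_sub_mul_comm, Matrix.mul_assoc _ Eᵀ E, hEE]
  have hD : (∏ i, d i) * (1 - diagonal (fun i => (d i)⁻¹) * M * (diagonal s * diagonal s)).det
      = (diagonal d - M * (diagonal s * diagonal s)).det := by
    rw [← Matrix.det_diagonal, ← Matrix.det_mul, Matrix.mul_sub, Matrix.mul_one,
      ← Matrix.mul_assoc (diagonal d), ← Matrix.mul_assoc (diagonal d), hDD, Matrix.one_mul]
  have hS : (diagonal d - M * (diagonal s * diagonal s)).det
      = (diagonal d - diagonal s * M * diagonal s).det := by
    have hS0 : (diagonal s).det ≠ 0 := by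
      rw [Matrix.det_diagonal]
      exact Finset.prod_ne_zero_iff.mpr fun i _ => hs0 i
    have hcomm : diagonal s * diagonal d = diagonal d * diagonal s := by
      simp [Matrix.diagonal_mul_diagonal, mul_comm]
    apply mul_left_cancel₀ hS0
    rw [mul_comm _ (Matrix.det (diagonal d - diagonal s * M * diagonal s)),
      ← Matrix.det_mul, ← Matrix.det_mul, Matrix.mul_sub, Matrix.sub_mul, hcomm]
    simp only [Matrix.mul_assoc]
  rw [hfac, Matrix.det_mul, det_blockDiagonal'_eq_prod, hsmall, mul_left_comm, hD, hS]

/-- When `α + δ = 0` the degree contributions of `A` and `D` cancel in every row sum. -/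
theorem univMat_row_sum {V : Type*} [Fintype V] [DecidableEq V]
    (G : SimpleGraph V) [DecidableRel G.Adj] {α β γ δ : ℝ} (hαδ : α + δ = 0) (a : V) :
    ∑ b, univMat G α β γ δ a b = β + γ * Fintype.card V := by
  have hA : ∑ b, G.adjMatrix ℝ a b = G.degree a := by
    simpa [Matrix.mulVec, dotProduct] using
      SimpleGraph.adjMatrix_mulVec_const_apply (G := G) (a := (1 : ℝ)) (v := a)
  simp only [univMat, Matrix.add_apply, Matrix.smul_apply, smul_eq_mul, Finset.sum_add_distrib,
    ← Finset.mul_sum, hA]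
  simp [Matrix.one_apply, Matrix.diagonal_apply]
  linear_combination (G.degree a : ℝ) * hαδ

/-- Universal spectrum of the `H`-join when `α + δ = 0`: `pᵢ = β + γnᵢ + δwᵢ` is an
eigenvalue of `Pᵢ = Uᵢ + δwᵢI` with eigenvector `1`, and
`(∏ᵢ (λ - pᵢ)) · det(λI - U(G)) = (∏ᵢ det(λI - Pᵢ)) · det(λI_k - Ũ′(G))`, where `Ũ′(G)` has
diagonal entries `pᵢ` and off-diagonal entries `√(nᵢnⱼ)(ρᵢⱼα + γ)`. (For
`(α,β,γ,δ) = (-1,0,0,1)` this gives the Laplacian spectrum of the `H`-join.) -/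
theorem univ_spec_HJoin_alphaDelta {k : ℕ} (n : Fin k → ℕ) (hn : ∀ i, 1 ≤ n i)
    (H : SimpleGraph (Fin k)) [DecidableRel H.Adj]
    (Gs : ∀ i, SimpleGraph (Fin (n i))) [∀ i, DecidableRel (Gs i).Adj]
    (ρ : Fin k → Fin k → ℝ) (hρ : ∀ i j, ρ i j = if H.Adj i j then 1 else 0)
    (w : Fin k → ℝ) (hw : ∀ i, w i = ∑ l ∈ H.neighborFinset i, (n l : ℝ))
    (α β γ δ : ℝ) (hα : α ≠ 0) (hαδ : α + δ = 0)
    (P : ∀ i, Matrix (Fin (n i)) (Fin (n i)) ℝ)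
    (hP : ∀ i, P i = univMat (Gs i) α β γ δ + (δ * w i) • (1 : Matrix _ _ ℝ))
    (UG : Matrix (Σ i, Fin (n i)) (Σ i, Fin (n i)) ℝ)
    (hdiag : ∀ i (a b : Fin (n i)), UG ⟨i, a⟩ ⟨i, b⟩ = P i a b)
    (hoff : ∀ i j (a : Fin (n i)) (b : Fin (n j)), i ≠ j →
      UG ⟨i, a⟩ ⟨j, b⟩ = ρ i j * α + γ)
    (p : Fin k → ℝ)
    (hp : ∀ i, p i = β + γ * n i + δ * w i) :
    (∀ i, P i *ᵥ (fun _ => (1 : ℝ)) = p i • (fun _ => (1 : ℝ))) ∧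
    (∏ i, (RatFunc.X - RatFunc.C (p i))) * (resolventForm UG).det
      = (∏ i, (resolventForm (P i)).det) *
        (resolventForm (Matrix.of fun i j : Fin k =>
          if i = j then p i
          else Real.sqrt ((n i : ℝ) * (n j : ℝ)) * (ρ i j * α + γ))).det := by
  have hrow : ∀ i a, ∑ b, P i a b = p i := by
    intro i a
    simp only [hP, Matrix.add_apply, Finset.sum_add_distrib, univMat_row_sum (Gs i) hαδ, hp]
    simp [Matrix.one_apply]
  refine ⟨fun i => ?_, ?_⟩
  · ext a
    simp [Matrix.mulVec, dotProduct, hrow]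
  let M : Matrix (Fin k) (Fin k) (RatFunc ℝ) :=
    Matrix.of fun i j => if i = j then 0 else RatFunc.C (ρ i j * α + γ)
  let s : Fin k → RatFunc ℝ := fun i => RatFunc.C (Real.sqrt (n i))
  have hn0 : ∀ i, (0 : ℝ) < n i := fun i => by exact_mod_cast hn i
  have hss : ∀ i, s i * s i = Fintype.card (Fin (n i)) := by
    intro i
    simp only [s, ← map_mul, Real.mul_self_sqrt (hn0 i).le, Fintype.card_fin, map_natCast]
  have hs0 : ∀ i, s i ≠ 0 := fun i =>
    (map_ne_zero RatFunc.C).mpr (Real.sqrt_pos.mpr (hn0 i)).ne'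
  have hd : ∀ i, (RatFunc.X - RatFunc.C (p i) : RatFunc ℝ) ≠ 0 := by
    intro i h
    apply Polynomial.X_sub_C_ne_zero (p i)
    apply RatFunc.algebraMap_injective ℝ
    simpa using h
  have hB : ∀ i a, ∑ b, resolventForm (P i) a b = RatFunc.X - RatFunc.C (p i) := by
    intro i a
    simp [resolventForm, Finset.sum_sub_distrib, Matrix.diagonal_apply, ← map_sum, hrow]
  have hbig : resolventForm UG = blockDiagonal' (fun i => resolventForm (P i))
      - Matrix.of fun x y : Σ i, Fin (n i) => M x.1 y.1 := by
    ext ⟨i, a⟩ ⟨j, b⟩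
    by_cases h : i = j
    · subst h
      simp [resolventForm, M, hdiag, Matrix.diagonal_apply, blockDiagonal'_apply]
    · simp [resolventForm, M, hoff i j a b h, h, blockDiagonal'_apply]
  have hsmall : resolventForm (Matrix.of fun i j : Fin k =>
          if i = j then p i
          else Real.sqrt ((n i : ℝ) * (n j : ℝ)) * (ρ i j * α + γ))
      = diagonal (fun i => RatFunc.X - RatFunc.C (p i)) - diagonal s * M * diagonal s := by
    ext i j
    by_cases h : i = j
    · subst h
      simp [resolventForm, M]
    · simp only [resolventForm, M, s, h, Matrix.sub_apply, Matrix.map_apply, Matrix.of_apply,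
        Matrix.mul_diagonal, Matrix.diagonal_mul, Matrix.diagonal_apply, if_false,
        Real.sqrt_mul (hn0 i).le, map_mul]
      ring
  rw [hbig, hsmall]
  exact det_blockDiagonal_sub_const _ _ hd hB M s hss hs0
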